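/- Let d ≥ 1, let H_B and H_R be finite-dimensional complex Hilbert spaces, let ψ ∈ ℂ^d ⊗ H_B ⊗ H_R be a unit vector, and let 0 ≤ ε ≤ 1. If there exists a POVM (Λ_z)_{z=0}^{d−1} on H_B whose guessing probability satisfies p_guess = ∑_z ⟨ψ| (|z⟩⟨z| ⊗ Λ_z ⊗ 1_R) |ψ⟩ ≥ 1 − ε, then the X-measurement outcome is √(2ε)-secure against R: p_secure(X^A|R) = D(ψ̄_X^{AR}, (1/d) 1_A ⊗ ψ^R) ≤ √(2ε). -/

import Mathlib

open Matrix BigOperators Finset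
open scoped Classical ComplexOrder

noncomputable section

/-- The positive semidefinite square root of a matrix (zero if the matrix is not PSD). -/
def psdSqrt {ι : Type*} [Fintype ι] [DecidableEq ι] (M : Matrix ι ι ℂ) : Matrix ι ι ℂ :=
  if h : M.PosSemidef then
    (h.1.eigenvectorUnitary : Matrix ι ι ℂ) *
      Matrix.diagonal ((RCLike.ofReal : ℝ → ℂ) ∘ Real.sqrt ∘ h.1.eigenvalues) *
      (star h.1.eigenvectorUnitary : Matrix ι ι ℂ)
  else 0

/-- Trace norm ‖M‖₁ = Tr √(M†M). -/
def traceNorm {ι : Type*} [Fintype ι] [DecidableEq ι] (M : Matrix ι ι ℂ) : ℝ :=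
  ((psdSqrt (Mᴴ * M)).trace).re

/-- Trace distance D(ρ,σ) = ‖ρ−σ‖₁/2. -/
def traceDist {ι : Type*} [Fintype ι] [DecidableEq ι] (ρ σ : Matrix ι ι ℂ) : ℝ :=
  traceNorm (ρ - σ) / 2

/-- Fidelity F(ρ,σ) = ‖√ρ√σ‖₁. -/
def fidelity {ι : Type*} [Fintype ι] [DecidableEq ι] (ρ σ : Matrix ι ι ℂ) : ℝ :=
  traceNorm (psdSqrt ρ * psdSqrt σ)

/-- ω = exp(2πi/d). -/
def omega (d : ℕ) : ℂ := Complex.exp (2 * Real.pi * Complex.I / d)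

/-- Conjugate (X) basis vector |x̃⟩ of ℂ^d, component at z: ω^{−xz}/√d. -/
def xVec (d : ℕ) (x z : Fin d) : ℂ :=
  (starRingEnd ℂ) (omega d ^ (x.val * z.val)) / (Real.sqrt d : ℂ)

/-- Component of (⟨x̃|⊗1_{BR})|ψ⟩. -/
def condVecX {d : ℕ} {β r : Type*} [Fintype β] [Fintype r]
    (ψ : Fin d × β × r → ℂ) (x : Fin d) (p : β × r) : ℂ :=
  ∑ z, (starRingEnd ℂ) (xVec d x z) * ψ (z, p.1, p.2)

/-- Unnormalized conditional state ϑ_x^R = Tr_B[(⟨x̃|⊗1)|ψ⟩⟨ψ|(|x̃⟩⊗1)]. -/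
def thetaR {d : ℕ} {β r : Type*} [Fintype β] [Fintype r]
    (ψ : Fin d × β × r → ℂ) (x : Fin d) : Matrix r r ℂ :=
  Matrix.of fun s s' => ∑ b, condVecX ψ x (b, s) * (starRingEnd ℂ) (condVecX ψ x (b, s'))

/-- X-measured cq marginal ψ̄_X^{AR} = ∑_x |x̃⟩⟨x̃| ⊗ ϑ_x^R. -/
def cqMarginalX {d : ℕ} {β r : Type*} [Fintype β] [Fintype r]
    (ψ : Fin d × β × r → ℂ) : Matrix (Fin d × r) (Fin d × r) ℂ :=
  Matrix.of fun p q =>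
    ∑ x, xVec d x p.1 * (starRingEnd ℂ) (xVec d x q.1) * thetaR ψ x p.2 q.2

/-- Reduced state ψ^R = Tr_{AB}|ψ⟩⟨ψ|. -/
def reducedR {α β r : Type*} [Fintype α] [Fintype β] [Fintype r]
    (ψ : α × β × r → ℂ) : Matrix r r ℂ :=
  Matrix.of fun s s' => ∑ z, ∑ b, ψ (z, b, s) * (starRingEnd ℂ) (ψ (z, b, s'))

/-- The ideal key state (1/d) 1_A ⊗ ψ^R. -/
def idealKey {d : ℕ} {β r : Type*} [Fintype β] [Fintype r]
    (ψ : Fin d × β × r → ℂ) : Matrix (Fin d × r) (Fin d × r) ℂ :=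
  Matrix.of fun p q => (if p.1 = q.1 then ((d : ℂ))⁻¹ else 0) * reducedR ψ p.2 q.2

/-- Security parameter p_secure(X^A|R) = D(ψ̄_X^{AR}, (1/d)1⊗ψ^R). -/
def pSecure {d : ℕ} {β r : Type*} [Fintype β] [DecidableEq β] [Fintype r] [DecidableEq r]
    (ψ : Fin d × β × r → ℂ) : ℝ :=
  traceDist (cqMarginalX ψ) (idealKey ψ)

/-- Guessing probability ∑_z ⟨ψ|(|z⟩⟨z| ⊗ Λ_z ⊗ 1_R)|ψ⟩. -/
def pGuess {d : ℕ} {β r : Type*} [Fintype β] [Fintype r]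
    (ψ : Fin d × β × r → ℂ) (Λ : Fin d → Matrix β β ℂ) : ℝ :=
  (∑ z, ∑ b, ∑ b', ∑ s, (starRingEnd ℂ) (ψ (z, b, s)) * Λ z b b' * ψ (z, b', s)).re

end

/-!
Read `ψ` as an operator `V` from `B` to `AR`, so that `V Vᴴ = ψ^{AR}`. Dephasing `A` in the `Z`
basis and then measuring it in the conjugate `X` basis produces exactly the ideal key, so the two
states compared by `pSecure` are the images under the `X` measurement of `ψ^{AR}` and of its
`Z`-dephased version. With an environment holding a guess `z`, the first is purified by the
square-root measurement `V √Λ_z`, the second by the coherent copy `|z⟩⟨z| V`. Since `Λ_z ≤ √Λ_z`,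
the overlap of these purifications is at least `p_guess ≥ 1 - ε`, and an isometric dilation of the
`X` measurement preserves it. States with purifications of overlap `F` have trace distance at most
`√(1 - F²)`, and `1 - (1 - ε)² ≤ 2ε`.
-/

section SquareRoot

open scoped MatrixOrder

variable {ι : Type*} [Fintype ι] [DecidableEq ι]

theorem psdSqrt_eq_sqrt (M : Matrix ι ι ℂ) : psdSqrt M = CFC.sqrt M := by
  by_cases h : M.PosSemidef
  · rw [psdSqrt, dif_pos h, CFC.sqrt_eq_real_sqrt M h.nonneg, cfcₙ_eq_cfc, h.1.cfc_eq]
    rfl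
  · rw [psdSqrt, dif_neg h, CFC.sqrt_of_not_nonneg (mt nonneg_iff_posSemidef.1 h)]

theorem psdSqrt_isHermitian (M : Matrix ι ι ℂ) : (psdSqrt M).IsHermitian := by
  rw [psdSqrt_eq_sqrt]
  exact (CFC.sqrt_nonneg M).posSemidef.1

theorem psdSqrt_mul_self {M : Matrix ι ι ℂ} (h : M.PosSemidef) : psdSqrt M * psdSqrt M = M := by
  rw [psdSqrt_eq_sqrt, CFC.sqrt_mul_sqrt_self M h.nonneg]

theorem psdSqrt_eq_cfc {M : Matrix ι ι ℂ} (h : M.PosSemidef) : psdSqrt M = cfc Real.sqrt M := by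
  rw [psdSqrt_eq_sqrt, CFC.sqrt_eq_real_sqrt M h.nonneg, cfcₙ_eq_cfc]

theorem posSemidef_psdSqrt_sub {M : Matrix ι ι ℂ} (h : M.PosSemidef)
    (h1 : (1 - M).PosSemidef) : (psdSqrt M - M).PosSemidef := by
  have hM : IsSelfAdjoint M := h.1
  have hspec : ∀ x ∈ spectrum ℝ M, x ≤ 1 := (CFC.le_one_iff M hM).1 (Matrix.le_iff.2 h1)
  rw [psdSqrt_eq_cfc h, ← Matrix.le_iff]
  conv_lhs => rw [← cfc_id' ℝ M]
  refine cfc_mono fun x hx => Real.le_sqrt_of_sq_le ?_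
  nlinarith [hspec x hx, spectrum_nonneg_of_nonneg h.nonneg hx]

theorem cfc_inv_sqrt_mul_self {M : Matrix ι ι ℂ} (h : M.PosSemidef) :
    cfc (fun x : ℝ => (√x)⁻¹) M * M = psdSqrt M := by
  have hM : IsSelfAdjoint M := h.1
  have hcont : ContinuousOn (fun x : ℝ => (√x)⁻¹) (spectrum ℝ M) :=
    finite_real_spectrum.continuousOn _
  calc cfc (fun x : ℝ => (√x)⁻¹) M * M
      = cfc (fun x : ℝ => (√x)⁻¹) M * cfc (fun x : ℝ => x) M := by rw [cfc_id' ℝ M]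
    _ = cfc (fun x : ℝ => (√x)⁻¹ * x) M := (cfc_mul _ _ M hcont).symm
    _ = psdSqrt M := by simp only [inv_mul_eq_div, Real.div_sqrt, psdSqrt_eq_cfc h]

-- The contraction is the adjoint `|M|⁻¹ Mᴴ` of the polar part of `M`, where `|M| = √(Mᴴ M)` and
-- the junk value `0⁻¹ = 0` makes `|M|⁻¹` the pseudo-inverse.
theorem exists_contraction_traceNorm_eq (M : Matrix ι ι ℂ) :
    ∃ S : Matrix ι ι ℂ, (1 - S * Sᴴ).PosSemidef ∧ traceNorm M = (S * M).trace.re := by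
  have hN : (Mᴴ * M).PosSemidef := posSemidef_conjTranspose_mul_self M
  have hcont : ContinuousOn (fun x : ℝ => (√x)⁻¹) (spectrum ℝ (Mᴴ * M)) :=
    finite_real_spectrum.continuousOn _
  set P := cfc (fun x : ℝ => (√x)⁻¹) (Mᴴ * M)
  have hP : Pᴴ = P := IsSelfAdjoint.cfc
  have hPN : P * (Mᴴ * M) = psdSqrt (Mᴴ * M) := cfc_inv_sqrt_mul_self hN
  refine ⟨P * Mᴴ, ?_, by rw [Matrix.mul_assoc, hPN, traceNorm]⟩
  have hS : P * Mᴴ * (P * Mᴴ)ᴴ = cfc (fun x : ℝ => √x * (√x)⁻¹) (Mᴴ * M) := by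
    rw [cfc_mul _ _ _ Real.continuous_sqrt.continuousOn hcont, ← psdSqrt_eq_cfc hN, ← hPN,
      conjTranspose_mul, conjTranspose_conjTranspose, hP]
    simp only [P, Matrix.mul_assoc]
  rw [hS]
  exact Matrix.le_iff.1 (cfc_le_one _ _ fun _ _ => mul_inv_le_one)

end SquareRoot

section HilbertSchmidt

open scoped Matrix.Norms.Frobenius

variable {ι κ : Type*} [Fintype ι] [Fintype κ]

theorem frobenius_norm_eq_norm_vec (A : Matrix ι κ ℂ) :
    ‖A‖ = ‖WithLp.toLp 2 (vec A)‖ := by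
  rw [frobenius_norm_def, EuclideanSpace.norm_eq, Real.sqrt_eq_rpow, sum_comm,
    ← Fintype.sum_prod_type']
  simp [vec]

theorem frobenius_norm_sq (A : Matrix ι κ ℂ) : ‖A‖ ^ 2 = (A * Aᴴ).trace.re := by
  rw [frobenius_norm_eq_norm_vec, @norm_sq_eq_re_inner ℂ, EuclideanSpace.inner_eq_star_dotProduct,
    dotProduct_comm, star_vec_dotProduct_vec, trace_mul_comm, RCLike.re_to_complex]

theorem frobenius_norm_eq_of_trace_eq {ι' κ' : Type*} [Fintype ι'] [Fintype κ'] {A : Matrix ι κ ℂ}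
    {B : Matrix ι' κ' ℂ} (h : (A * Aᴴ).trace = (B * Bᴴ).trace) : ‖A‖ = ‖B‖ := by
  rw [← sq_eq_sq₀ (norm_nonneg A) (norm_nonneg B), frobenius_norm_sq, frobenius_norm_sq, h]

theorem re_trace_mul_conjTranspose_comm (A B : Matrix ι κ ℂ) :
    (B * Aᴴ).trace.re = (A * Bᴴ).trace.re := by
  rw [← conjTranspose_conjTranspose B, ← conjTranspose_mul, trace_conjTranspose,
    conjTranspose_conjTranspose, RCLike.star_def, Complex.conj_re]

theorem re_trace_mul_conjTranspose_le (A B : Matrix ι κ ℂ) :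
    (A * Bᴴ).trace.re ≤ ‖A‖ * ‖B‖ := by
  rw [frobenius_norm_eq_norm_vec A, frobenius_norm_eq_norm_vec B, trace_mul_comm,
    ← star_vec_dotProduct_vec, dotProduct_comm, mul_comm]
  exact re_inner_le_norm (𝕜 := ℂ) (WithLp.toLp 2 (vec B)) (WithLp.toLp 2 (vec A))

theorem frobenius_norm_add_sq (A B : Matrix ι κ ℂ) :
    ‖A + B‖ ^ 2 = ‖A‖ ^ 2 + 2 * (A * Bᴴ).trace.re + ‖B‖ ^ 2 := by
  simp only [frobenius_norm_sq, conjTranspose_add, Matrix.add_mul, Matrix.mul_add, trace_add,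
    Complex.add_re, re_trace_mul_conjTranspose_comm A B]
  ring

theorem frobenius_norm_sub_sq (A B : Matrix ι κ ℂ) :
    ‖A - B‖ ^ 2 = ‖A‖ ^ 2 - 2 * (A * Bᴴ).trace.re + ‖B‖ ^ 2 := by
  simp only [frobenius_norm_sq, conjTranspose_sub, Matrix.sub_mul, Matrix.mul_sub, trace_sub,
    Complex.sub_re, re_trace_mul_conjTranspose_comm A B]
  ring

variable [DecidableEq ι]

theorem frobenius_norm_conjTranspose_mul_le {S : Matrix ι ι ℂ} (hS : (1 - S * Sᴴ).PosSemidef)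
    (A : Matrix ι κ ℂ) : ‖Sᴴ * A‖ ≤ ‖A‖ := by
  have h := (Complex.le_def.1 (hS.conjTranspose_mul_mul_same A).trace_nonneg).1
  refine le_of_sq_le_sq ?_ (norm_nonneg A)
  rw [frobenius_norm_sq, frobenius_norm_sq, trace_mul_comm, trace_mul_comm A]
  simpa [Matrix.mul_sub, Matrix.sub_mul, Matrix.mul_assoc] using h

theorem re_trace_contraction_mul_le {S : Matrix ι ι ℂ} (hS : (1 - S * Sᴴ).PosSemidef)
    (A B : Matrix ι κ ℂ) : (S * (A * Bᴴ)).trace.re ≤ ‖A‖ * ‖B‖ :=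
  calc (S * (A * Bᴴ)).trace.re = (A * (Sᴴ * B)ᴴ).trace.re := by
        rw [conjTranspose_mul, conjTranspose_conjTranspose, trace_mul_comm, Matrix.mul_assoc]
    _ ≤ ‖A‖ * ‖Sᴴ * B‖ := re_trace_mul_conjTranspose_le _ _
    _ ≤ ‖A‖ * ‖B‖ := by gcongr; exact frobenius_norm_conjTranspose_mul_le hS B

theorem traceNorm_gram_sub_gram_le (A B : Matrix ι κ ℂ) :
    traceNorm (A * Aᴴ - B * Bᴴ) ≤ ‖A - B‖ * ‖A + B‖ := by
  obtain ⟨S, hS, htrace⟩ := exists_contraction_traceNorm_eq (A * Aᴴ - B * Bᴴ)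
  have hpolar : (2 : ℝ) • (S * (A * Aᴴ - B * Bᴴ)) =
      S * ((A - B) * (A + B)ᴴ) + S * ((A + B) * (A - B)ᴴ) := by
    rw [← Matrix.mul_add, ← Matrix.mul_smul]
    congr 1
    simp only [conjTranspose_add, conjTranspose_sub, Matrix.sub_mul, Matrix.add_mul,
      Matrix.mul_add, Matrix.mul_sub]
    module
  have hre := congrArg (fun N => N.trace.re) hpolar
  simp only [trace_smul, trace_add, Complex.add_re, Complex.smul_re, smul_eq_mul] at hre
  linarith [re_trace_contraction_mul_le hS (A - B) (A + B),
    re_trace_contraction_mul_le hS (A + B) (A - B), mul_comm ‖A - B‖ ‖A + B‖]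

-- The bound `√(1 - F²)` for the states purified by `A` and `B`, with `F` the overlap of these
-- purifications.
theorem traceDist_gram_le {A B : Matrix ι κ ℂ} (hA : ‖A‖ = 1) (hB : ‖B‖ = 1) :
    traceDist (A * Aᴴ) (B * Bᴴ) ≤ √(1 - (A * Bᴴ).trace.re ^ 2) := by
  have hprod : (‖A - B‖ * ‖A + B‖ / 2) ^ 2 = 1 - (A * Bᴴ).trace.re ^ 2 := by
    rw [div_pow, mul_pow, frobenius_norm_sub_sq, frobenius_norm_add_sq, hA, hB]
    ring
  rw [← hprod, Real.sqrt_sq (by positivity), traceDist]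
  gcongr
  exact traceNorm_gram_sub_gram_le A B

end HilbertSchmidt

section KrausMap

variable {ι ι' κ γ : Type*} [Fintype κ] [Fintype γ]

/-- The matrix obtained by placing the blocks `W k` side by side. When the blocks are Kraus
operators applied to a purification, the index `k` is the environment of the dilated channel. -/
def blockRow (W : κ → Matrix ι γ ℂ) : Matrix ι (κ × γ) ℂ :=
  of fun i q => W q.1 i q.2

theorem blockRow_mul_conjTranspose (W W' : κ → Matrix ι γ ℂ) :
    blockRow W * (blockRow W')ᴴ = ∑ k, W k * (W' k)ᴴ := by
  ext i j
  simp only [blockRow, mul_apply, conjTranspose_apply, of_apply, Fintype.sum_prod_type,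
    Matrix.sum_apply]

variable [Fintype ι]

/-- The completely positive map with Kraus operators `K k`. -/
def krausMap (K : κ → Matrix ι' ι ℂ) (M : Matrix ι ι ℂ) : Matrix ι' ι' ℂ :=
  ∑ k, K k * M * (K k)ᴴ

theorem krausMap_gram (K : κ → Matrix ι' ι ℂ) (A : Matrix ι γ ℂ) :
    krausMap K (A * Aᴴ) = blockRow (fun k => K k * A) * (blockRow fun k => K k * A)ᴴ := by
  simp only [krausMap, blockRow_mul_conjTranspose, conjTranspose_mul, Matrix.mul_assoc]

theorem krausMap_gram_apply (K : κ → Matrix ι' ι ℂ) (A : Matrix ι γ ℂ) (i j : ι') :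
    krausMap K (A * Aᴴ) i j = ∑ k, ∑ c, (K k * A) i c * star ((K k * A) j c) := by
  rw [krausMap_gram, blockRow_mul_conjTranspose, Matrix.sum_apply]
  rfl

theorem trace_blockRow_kraus_mul_conjTranspose [Fintype ι'] [DecidableEq ι]
    {K : κ → Matrix ι' ι ℂ} (hK : ∑ k, (K k)ᴴ * K k = 1) (A B : Matrix ι γ ℂ) :
    (blockRow (fun k => K k * A) * (blockRow fun k => K k * B)ᴴ).trace = (A * Bᴴ).trace := by
  have hcycle : ∀ k, (K k * A * (K k * B)ᴴ).trace = ((K k)ᴴ * K k * (A * Bᴴ)).trace := fun k => by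
    rw [conjTranspose_mul, ← Matrix.mul_assoc, trace_mul_comm]
    simp only [Matrix.mul_assoc]
  simp only [blockRow_mul_conjTranspose, trace_sum, hcycle]
  rw [← trace_sum, ← Matrix.sum_mul, hK, Matrix.one_mul]

open scoped Matrix.Norms.Frobenius

-- The dilated channel maps the purifications `A` and `B` isometrically to purifications of the
-- output states, so it does not change their overlap.
theorem traceDist_krausMap_gram_le [Fintype ι'] [DecidableEq ι'] [DecidableEq ι]
    {K : κ → Matrix ι' ι ℂ} (hK : ∑ k, (K k)ᴴ * K k = 1) {A B : Matrix ι γ ℂ}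
    (hA : ‖A‖ = 1) (hB : ‖B‖ = 1) :
    traceDist (krausMap K (A * Aᴴ)) (krausMap K (B * Bᴴ)) ≤ √(1 - (A * Bᴴ).trace.re ^ 2) := by
  have hnorm : ∀ C : Matrix ι γ ℂ, ‖blockRow fun k => K k * C‖ = ‖C‖ := fun C =>
    frobenius_norm_eq_of_trace_eq (trace_blockRow_kraus_mul_conjTranspose hK C C)
  rw [krausMap_gram, krausMap_gram, ← trace_blockRow_kraus_mul_conjTranspose hK A B]
  exact traceDist_gram_le ((hnorm A).trans hA) ((hnorm B).trans hB)

end KrausMap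

section Dephasing

open scoped Matrix.Norms.Frobenius

variable {ι ι' κ χ γ : Type*} [Fintype κ] [DecidableEq γ]

theorem posSemidef_one_sub_of_sum_eq_one {E : κ → Matrix γ γ ℂ} (hE : ∀ k, (E k).PosSemidef)
    (hsum : ∑ k, E k = 1) (k : κ) : (1 - E k).PosSemidef := by
  rw [← hsum, ← add_sum_erase univ E (mem_univ k), add_sub_cancel_left]
  exact posSemidef_sum _ fun j _ => hE j

variable [Fintype γ]

theorem blockRow_mul_psdSqrt_gram {E : κ → Matrix γ γ ℂ} (hE : ∀ k, (E k).PosSemidef)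
    (hsum : ∑ k, E k = 1) (V : Matrix ι γ ℂ) :
    blockRow (fun k => V * psdSqrt (E k)) * (blockRow fun k => V * psdSqrt (E k))ᴴ = V * Vᴴ := by
  have hsq : ∀ k, V * psdSqrt (E k) * (V * psdSqrt (E k))ᴴ = V * E k * Vᴴ := fun k => by
    rw [conjTranspose_mul, psdSqrt_isHermitian, ← Matrix.mul_assoc, Matrix.mul_assoc V,
      psdSqrt_mul_self (hE k)]
  simp only [blockRow_mul_conjTranspose, hsq]
  rw [← Matrix.sum_mul, ← Matrix.mul_sum, hsum, Matrix.mul_one]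

variable [Fintype ι]

-- The square-root measurement only increases the overlap, since `E ≤ √E` for `0 ≤ E ≤ 1`.
theorem sum_re_trace_le_re_trace_blockRow {Z : κ → Matrix ι ι ℂ} (hZ : ∀ k, IsStarProjection (Z k))
    {E : κ → Matrix γ γ ℂ} (hE : ∀ k, (E k).PosSemidef) (hsum : ∑ k, E k = 1)
    (V : Matrix ι γ ℂ) :
    ∑ k, (Z k * V * E k * (Z k * V)ᴴ).trace.re ≤
      (blockRow (fun k => V * psdSqrt (E k)) * (blockRow fun k => Z k * V)ᴴ).trace.re := by
  have hproj : ∀ k, (V * psdSqrt (E k) * (Z k * V)ᴴ).trace =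
      (Z k * V * psdSqrt (E k) * (Z k * V)ᴴ).trace := fun k => by
    have hH : (Z k)ᴴ = Z k := (hZ k).isSelfAdjoint
    rw [conjTranspose_mul, hH, ← Matrix.mul_assoc, ← Matrix.mul_assoc, trace_mul_comm _ (Z k),
      trace_mul_comm _ (Z k)]
    simp only [← Matrix.mul_assoc, (hZ k).isIdempotentElem.eq]
  rw [blockRow_mul_conjTranspose, trace_sum, Complex.re_sum]
  refine sum_le_sum fun k _ => ?_
  have hle := (posSemidef_psdSqrt_sub (hE k) (posSemidef_one_sub_of_sum_eq_one hE hsum k))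
  have h := (Complex.le_def.1 (hle.mul_mul_conjTranspose_same (Z k * V)).trace_nonneg).1
  rw [Matrix.mul_sub, Matrix.sub_mul, trace_sub, Complex.sub_re, Complex.zero_re] at h
  rw [hproj]
  linarith

theorem sum_conjTranspose_mul_self_eq_one [DecidableEq ι] {Z : κ → Matrix ι ι ℂ}
    (hZ : ∀ k, IsStarProjection (Z k)) (hsum : ∑ k, Z k = 1) : ∑ k, (Z k)ᴴ * Z k = 1 := by
  rw [← hsum]
  exact sum_congr rfl fun k _ => by
    rw [← star_eq_conjTranspose, (hZ k).isSelfAdjoint.star_eq, (hZ k).isIdempotentElem.eq]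

theorem traceDist_krausMap_dephase_le [DecidableEq ι] [Fintype ι'] [DecidableEq ι'] [Fintype χ]
    {K : χ → Matrix ι' ι ℂ} (hK : ∑ x, (K x)ᴴ * K x = 1)
    {Z : κ → Matrix ι ι ℂ} (hZ : ∀ k, IsStarProjection (Z k)) (hZsum : ∑ k, Z k = 1)
    {E : κ → Matrix γ γ ℂ} (hE : ∀ k, (E k).PosSemidef) (hEsum : ∑ k, E k = 1)
    {V : Matrix ι γ ℂ} (hV : ‖V‖ = 1) {p : ℝ} (hp0 : 0 ≤ p)
    (hp : p ≤ ∑ k, (Z k * V * E k * (Z k * V)ᴴ).trace.re) :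
    traceDist (krausMap K (V * Vᴴ)) (krausMap K (krausMap Z (V * Vᴴ))) ≤ √(1 - p ^ 2) := by
  have hZK := sum_conjTranspose_mul_self_eq_one hZ hZsum
  have hgram := blockRow_mul_psdSqrt_gram hE hEsum V
  have hmeas : ‖blockRow fun k => V * psdSqrt (E k)‖ = 1 :=
    (frobenius_norm_eq_of_trace_eq (congrArg trace hgram)).trans hV
  have hcopy : ‖blockRow fun k => Z k * V‖ = 1 :=
    (frobenius_norm_eq_of_trace_eq (trace_blockRow_kraus_mul_conjTranspose hZK V V)).trans hV
  have hoverlap := hp.trans (sum_re_trace_le_re_trace_blockRow hZ hE hEsum V)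
  rw [krausMap_gram Z, ← hgram]
  refine (traceDist_krausMap_gram_le hK hmeas hcopy).trans ?_
  gcongr

end Dephasing

section LocalMeasurement

open scoped Kronecker

variable {α r β : Type*} [DecidableEq r]

/-- The projection `|u_k⟩⟨u_k| ⊗ 1`, where the vectors `u_k` are the rows of `U`. For unitary `U`
these describe the measurement of the first tensor factor in the basis `u`: the `Z` measurement for
`U = 1`, the `X` measurement for `U = of (xVec d)`. -/
def localProj (U : Matrix α α ℂ) (r : Type*) [DecidableEq r] (k : α) :
    Matrix (α × r) (α × r) ℂ :=
  vecMulVec (U k) (star (U k)) ⊗ₖ (1 : Matrix r r ℂ)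

variable [Fintype α]

theorem localProj_mul_apply [Fintype r] (U : Matrix α α ℂ) (k : α) (M : Matrix (α × r) β ℂ)
    (a : α) (s : r) (b : β) :
    (localProj U r k * M) (a, s) b = U k a * ∑ z, star (U k z) * M (z, s) b := by
  simp [localProj, mul_apply, Fintype.sum_prod_type, vecMulVec_apply, one_apply, mul_sum, mul_assoc]

variable [DecidableEq α]

theorem localProj_one_mul_apply [Fintype r] (z : α) (M : Matrix (α × r) β ℂ) (a : α) (s : r)
    (b : β) : (localProj 1 r z * M) (a, s) b = if z = a then M (z, s) b else 0 := by
  simp [localProj_mul_apply, one_apply]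

theorem localProj_mul_blockRow_localProj_one_apply [Fintype r] (U : Matrix α α ℂ) (k : α)
    (M : Matrix (α × r) β ℂ) (a : α) (s : r) (z : α) (b : β) :
    (localProj U r k * (blockRow fun z => localProj 1 r z * M : Matrix (α × r) (α × β) ℂ))
      (a, s) (z, b) = U k a * (star (U k z) * M (z, s) b) := by
  simp [localProj_mul_apply U, blockRow, localProj_one_mul_apply]

theorem isStarProjection_localProj [Fintype r] {U : Matrix α α ℂ} (hU : U ∈ unitaryGroup α ℂ)
    (k : α) : IsStarProjection (localProj U r k) where
  isIdempotentElem := by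
    have hunit : star (U k) ⬝ᵥ U k = 1 := by
      rw [dotProduct_comm]
      exact (congrFun₂ (mem_unitaryGroup_iff.1 hU) k k).trans (one_apply_eq k)
    rw [IsIdempotentElem, localProj, ← mul_kronecker_mul, vecMulVec_mul_vecMulVec, hunit, one_smul,
      Matrix.mul_one]
  isSelfAdjoint := by
    rw [IsSelfAdjoint, star_eq_conjTranspose, localProj, conjTranspose_kronecker,
      conjTranspose_one, conjTranspose_vecMulVec, star_star]

theorem sum_localProj {U : Matrix α α ℂ} (hU : U ∈ unitaryGroup α ℂ) :
    ∑ k, localProj U r k = 1 := by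
  have hcomplete : ∑ k, vecMulVec (U k) (star (U k)) = 1 := by
    rw [← transpose_one, ← mem_unitaryGroup_iff'.1 hU]
    ext a b
    simp [Matrix.sum_apply, vecMulVec_apply, mul_apply, mul_comm]
  rw [← one_kronecker_one, ← hcomplete]
  ext ⟨a, s⟩ ⟨b, t⟩
  simp only [localProj, Matrix.sum_apply, kronecker_apply, sum_mul]

end LocalMeasurement

section ConjugateBasis

variable {d : ℕ}

theorem xVec_mul_star_xVec (x y z : Fin d) :
    xVec d x z * star (xVec d y z) = (star (omega d ^ x.val) * omega d ^ y.val) ^ z.val / d := by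
  have hsqrt : (√d : ℂ) * (√d : ℂ) = d := by
    rw [← Complex.ofReal_mul, Real.mul_self_sqrt (Nat.cast_nonneg d), Complex.ofReal_natCast]
  simp only [xVec, RCLike.star_def, map_div₀, Complex.conj_conj, Complex.conj_ofReal]
  rw [div_mul_div_comm, hsqrt, mul_pow, pow_mul, pow_mul, ← map_pow]

theorem isPrimitiveRoot_omega (hd : d ≠ 0) : IsPrimitiveRoot (omega d) d :=
  Complex.isPrimitiveRoot_exp d hd

theorem omega_pow_mul_star (hd : d ≠ 0) (n : ℕ) : omega d ^ n * star (omega d ^ n) = 1 := by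
  rw [RCLike.star_def, Complex.mul_conj', norm_pow, (isPrimitiveRoot_omega hd).norm'_eq_one hd]
  norm_num

theorem xVec_mul_star_self (x z : Fin d) : xVec d x z * star (xVec d x z) = (d : ℂ)⁻¹ := by
  rw [xVec_mul_star_xVec, mul_comm (star _), omega_pow_mul_star x.pos.ne', one_pow, one_div]

theorem of_xVec_mem_unitaryGroup : of (xVec d) ∈ unitaryGroup (Fin d) ℂ := by
  refine mem_unitaryGroup_iff.2 (Matrix.ext fun x y => ?_)
  have hd : d ≠ 0 := x.pos.ne'
  simp only [mul_apply, star_apply, of_apply]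
  obtain rfl | hxy := eq_or_ne x y
  · simp only [xVec_mul_star_self, sum_const, card_univ, Fintype.card_fin, one_apply_eq]
    simp [hd]
  · set ζ := star (omega d ^ x.val) * omega d ^ y.val with hζ
    have hω := isPrimitiveRoot_omega hd
    have hζd : ζ ^ d = 1 := by
      rw [hζ, mul_pow, ← star_pow, ← pow_mul, ← pow_mul, mul_comm x.val, mul_comm y.val, pow_mul,
        pow_mul, hω.pow_eq_one, one_pow, one_pow, star_one, one_mul]
    have hζ1 : ζ ≠ 1 := fun h => hxy <| Fin.ext <| hω.pow_inj x.2 y.2 <| by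
      rw [← mul_one (omega d ^ x.val), ← h, hζ, ← mul_assoc, omega_pow_mul_star hd, one_mul]
    simp only [xVec_mul_star_xVec, ← hζ, ← sum_div]
    rw [Fin.sum_univ_eq_sum_range (ζ ^ ·), geom_sum_eq hζ1, hζd, sub_self, zero_div, zero_div,
      one_apply_ne hxy]

theorem sum_xVec_mul_star_xVec (a b : Fin d) :
    ∑ x, xVec d x a * star (xVec d x b) = if a = b then 1 else 0 := by
  have h := congrFun₂ (mem_unitaryGroup_iff'.1 (of_xVec_mem_unitaryGroup (d := d))) b a
  simp only [mul_apply, star_apply, of_apply, one_apply, eq_comm (a := b)] at h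
  simpa only [mul_comm] using h

end ConjugateBasis

section Purification

open scoped Matrix.Norms.Frobenius

variable {α β r : Type*}

/-- The coefficients of `ψ` as an operator from `B` to `AR`; its Gram matrix is the reduced state
`ψ^{AR}`, and operators on `B` act on it by right multiplication with their transposes. -/
def coeffMatrix (ψ : α × β × r → ℂ) : Matrix (α × r) β ℂ :=
  of fun p b => ψ (p.1, b, p.2)

theorem frobenius_norm_coeffMatrix [Fintype α] [Fintype β] [Fintype r] {ψ : α × β × r → ℂ}
    (hψ : ∑ t, ‖ψ t‖ ^ 2 = 1) : ‖coeffMatrix ψ‖ = 1 := by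
  rw [← sq_eq_sq₀ (norm_nonneg _) zero_le_one, one_pow, ← hψ, frobenius_norm_def,
    ← Real.sqrt_eq_rpow, Real.sq_sqrt (by positivity)]
  simp only [coeffMatrix, of_apply, Fintype.sum_prod_type, Real.rpow_two]
  exact sum_congr rfl fun _ _ => sum_comm

variable {d : ℕ} [Fintype β] [Fintype r] [DecidableEq r] (ψ : Fin d × β × r → ℂ)

theorem cqMarginalX_eq_krausMap :
    cqMarginalX ψ = krausMap (localProj (of (xVec d)) r) (coeffMatrix ψ * (coeffMatrix ψ)ᴴ) := by
  have hcond : ∀ x a s b, (localProj (of (xVec d)) r x * coeffMatrix ψ) (a, s) b =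
      xVec d x a * condVecX ψ x (b, s) := fun x a s b => localProj_mul_apply ..
  ext ⟨a, s⟩ ⟨a', s'⟩
  simp only [cqMarginalX, thetaR, krausMap_gram_apply, hcond, of_apply, star_mul',
    starRingEnd_apply, mul_sum]
  exact sum_congr rfl fun x _ => sum_congr rfl fun b _ => mul_mul_mul_comm ..

theorem idealKey_eq_krausMap :
    idealKey ψ = krausMap (localProj (of (xVec d)) r)
      (krausMap (localProj 1 r) (coeffMatrix ψ * (coeffMatrix ψ)ᴴ)) := by
  ext ⟨a, s⟩ ⟨a', s'⟩
  have hterm : ∀ x z b, xVec d x a * (star (xVec d x z) * ψ (z, b, s)) *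
      star (xVec d x a' * (star (xVec d x z) * ψ (z, b, s'))) =
      xVec d x a * star (xVec d x a') * ((d : ℂ)⁻¹ * (ψ (z, b, s) * star (ψ (z, b, s')))) :=
    fun x z b => by
      rw [← xVec_mul_star_self x z]
      simp only [star_mul', star_star]
      ring
  rw [krausMap_gram (localProj 1 r), krausMap_gram_apply]
  simp only [Fintype.sum_prod_type, localProj_mul_blockRow_localProj_one_apply, coeffMatrix,
    of_apply, hterm, ← mul_sum, ← sum_mul, sum_xVec_mul_star_xVec]
  simp only [idealKey, reducedR, of_apply, starRingEnd_apply, ite_mul, one_mul, zero_mul]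

theorem pGuess_eq_sum_trace (Λ : Fin d → Matrix β β ℂ) :
    pGuess ψ Λ = ∑ z, (localProj 1 r z * coeffMatrix ψ * (Λ z)ᵀ *
      (localProj 1 r z * coeffMatrix ψ)ᴴ).trace.re := by
  rw [pGuess, Complex.re_sum]
  refine sum_congr rfl fun z _ => congrArg Complex.re ?_
  have hproj : ∀ a s b, (localProj 1 r z * coeffMatrix ψ) (a, s) b =
      if z = a then ψ (z, b, s) else 0 := localProj_one_mul_apply z (coeffMatrix ψ)
  generalize localProj 1 r z * coeffMatrix ψ = W at hproj
  calc ∑ b, ∑ b', ∑ s, starRingEnd ℂ (ψ (z, b, s)) * Λ z b b' * ψ (z, b', s)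
      = ∑ b, ∑ s, ∑ b', ψ (z, b', s) * Λ z b b' * starRingEnd ℂ (ψ (z, b, s)) :=
        sum_congr rfl fun b _ => sum_comm.trans <|
          sum_congr rfl fun s _ => sum_congr rfl fun b' _ => by ring
    _ = ∑ s, ∑ b, ∑ b', ψ (z, b', s) * Λ z b b' * starRingEnd ℂ (ψ (z, b, s)) := sum_comm
    _ = (W * (Λ z)ᵀ * Wᴴ).trace := by
        simp [trace, Matrix.mul_apply, Fintype.sum_prod_type, hproj, sum_mul]

end Purification

/-- ε-recoverability of Z^A from B implies √(2ε)-security of X^A against R. -/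
theorem recoverable_implies_secure {d : ℕ} (hd : 1 ≤ d)
    {β r : Type*} [Fintype β] [DecidableEq β] [Fintype r] [DecidableEq r]
    (ψ : Fin d × β × r → ℂ) (hψ : ∑ t, ‖ψ t‖ ^ 2 = 1)
    (ε : ℝ) (hε0 : 0 ≤ ε) (hε1 : ε ≤ 1)
    (Λ : Fin d → Matrix β β ℂ)
    (hΛpos : ∀ z, (Λ z).PosSemidef) (hΛsum : ∑ z, Λ z = 1)
    (hguess : 1 - ε ≤ pGuess ψ Λ) :
    pSecure ψ ≤ Real.sqrt (2 * ε) := by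
  have hZ : ∀ z : Fin d, IsStarProjection (localProj 1 r z) :=
    isStarProjection_localProj (one_mem _)
  have hX : ∑ x, (localProj (of (xVec d)) r x)ᴴ * localProj (of (xVec d)) r x = 1 :=
    sum_conjTranspose_mul_self_eq_one (isStarProjection_localProj of_xVec_mem_unitaryGroup)
      (sum_localProj of_xVec_mem_unitaryGroup)
  have hΛT : ∑ z, (Λ z)ᵀ = 1 := by rw [← transpose_sum, hΛsum, transpose_one]
  rw [pGuess_eq_sum_trace] at hguess
  calc pSecure ψ ≤ √(1 - (1 - ε) ^ 2) := by
        rw [pSecure, cqMarginalX_eq_krausMap, idealKey_eq_krausMap]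
        exact traceDist_krausMap_dephase_le hX hZ (sum_localProj (one_mem _))
          (fun z => (hΛpos z).transpose) hΛT (frobenius_norm_coeffMatrix hψ)
          (sub_nonneg.2 hε1) hguess
    _ ≤ √(2 * ε) := Real.sqrt_le_sqrt (by nlinarith [sq_nonneg ε])
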